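/- Let Δ = (0, i, −i) ∈ ℂ³ and, for t ∈ ℝ, set η(t) = −2e^{2πit} + e^{−4πit}, η'(t) = 2e^{−2πit} + e^{4πit}, and Δ(t) := S[η(t), η'(t)]·Δ. Then the first vertex of Δ(t) equals (4√3/3)·cos(2πt) + i·(2√3/3)·sin(4πt), and every vertex z of Δ(t) lies on the figure-eight curve X² = (3/16)·X⁴ + Y², where X = Re z and Y = Im z. -/

import Mathlib

noncomputable def ω : ℂ := Complex.exp (2 * Real.pi * Complex.I / 3)

def J : Matrix (Fin 3) (Fin 3) ℂ := !![0,1,0; 0,0,1; 1,0,0]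

noncomputable def W : Matrix (Fin 3) (Fin 3) ℂ := !![1,1,1; 1,ω,ω^2; 1,ω^2,ω]

/-- generalized cevian operator `S[η,η'] = W ⬝ diag(1,η',η) ⬝ W⁻¹` -/
noncomputable def S (η η' : ℂ) : Matrix (Fin 3) (Fin 3) ℂ :=
  W * Matrix.diagonal ![1, η', η] * W⁻¹

/-- `ω^k` for `k : ZMod 3` (well defined since `ω^3 = 1`). -/
noncomputable def ωz (k : ZMod 3) : ℂ := ω ^ k.val

/-- `J^k` for `k : ZMod 3` (well defined since `J^3 = 1`). -/
def Jz (k : ZMod 3) : Matrix (Fin 3) (Fin 3) ℂ := J ^ k.val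

/-- generalized median operator `M^{wx/yz}[η,η']` -/
noncomputable def M (η η' : ℂ) (w x y z : ZMod 3) : Matrix (Fin 3) (Fin 3) ℂ :=
  S ((η * ωz (-x) - ωz (-w)) / (ωz (-z) - ωz (-y)))
    ((η' * ωz x - ωz w) / (ωz z - ωz y))

/-!
The columns of `W` are the characters of `ℤ/3`, and `S[η,η']` multiplies the Fourier coefficients
of a triangle in this basis by `1, η', η`. The triangle `(0, i, -i)` has coefficients
`0, √3/3, -√3/3`, so the `k`-th vertex of its image is `√3/3 * (ω^k * η' - ω^(-k) * η)`.

With `z = exp (2πit)` on the unit circle, `η = -2z + z⁻²` and `η' = 2z⁻¹ + z²`. Rotating `z` by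
`ω^(-k)` multiplies `η` by `ω^(-k)` and `η'` by `ω^k`, so the three vertices traverse one and the
same curve. The first vertex is `4√3/3 * (x + i x y)` with `z = x + i y`, for which the equation of
the figure eight reduces to `x² + y² = 1`.
-/

open Matrix
open scoped FourierTransform

theorem sq_eq_inv_of_pow_three_eq_one {α : Type*} [DivisionMonoid α] {a : α} (ha : a ^ 3 = 1) :
    a ^ 2 = a⁻¹ :=
  eq_inv_of_mul_eq_one_left (by rw [← pow_succ, ha])

theorem isPrimitiveRoot_ω : IsPrimitiveRoot ω 3 :=
  Complex.isPrimitiveRoot_exp 3 (by norm_num)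

theorem ω_pow_three : ω ^ 3 = 1 :=
  isPrimitiveRoot_ω.pow_eq_one

theorem ω_pow_pow_three (n : ℕ) : (ω ^ n) ^ 3 = 1 := by
  rw [pow_right_comm, ω_pow_three, one_pow]

theorem norm_ω_pow_inv_mul (n : ℕ) (z : ℂ) : ‖(ω ^ n)⁻¹ * z‖ = ‖z‖ := by
  simp [isPrimitiveRoot_ω.norm'_eq_one three_ne_zero]

theorem ω_sub_ω_sq : ω - ω ^ 2 = (√3 : ℂ) * Complex.I := by
  have ω_sq : ω ^ 2 = starRingEnd ℂ ω := by
    rw [sq_eq_inv_of_pow_three_eq_one ω_pow_three,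
      Complex.inv_eq_conj (isPrimitiveRoot_ω.norm'_eq_one three_ne_zero)]
  have ω_im : ω.im = √3 / 2 := by
    have exponent_eq : 2 * Real.pi * Complex.I / 3 = (Real.pi - Real.pi / 3 : ℝ) * Complex.I := by
      push_cast; ring
    rw [ω, exponent_eq, Complex.exp_ofReal_mul_I_im, Real.sin_pi_sub, Real.sin_pi_div_three]
  rw [ω_sq, Complex.sub_conj, ω_im, mul_div_cancel₀ _ two_ne_zero]

theorem W_eq_vandermonde : W = vandermonde fun i : Fin 3 => ω ^ (i : ℕ) := by
  have ω_sq_sq : (ω ^ 2) ^ 2 = ω := by linear_combination ω * ω_pow_three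
  ext i j
  fin_cases i <;> fin_cases j <;> simp [W, vandermonde_apply, ω_sq_sq]

theorem isUnit_det_W : IsUnit W.det := by
  rw [W_eq_vandermonde, isUnit_iff_ne_zero, det_vandermonde_ne_zero_iff]
  exact fun i j h => Fin.ext (isPrimitiveRoot_ω.pow_inj i.isLt j.isLt h)

theorem W_mulVec_apply (c : Fin 3 → ℂ) (k : Fin 3) :
    (W *ᵥ c) k = c 0 + ω ^ (k : ℕ) * c 1 + (ω ^ (k : ℕ))⁻¹ * c 2 := by
  simp [W_eq_vandermonde, mulVec, dotProduct, Fin.sum_univ_three, vandermonde_apply,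
    sq_eq_inv_of_pow_three_eq_one (ω_pow_pow_three k)]

theorem S_mul_W (η η' : ℂ) : S η η' * W = W * diagonal ![1, η', η] :=
  nonsing_inv_mul_cancel_right _ _ isUnit_det_W

theorem S_mulVec_W_mulVec_apply (η η' : ℂ) (c : Fin 3 → ℂ) (k : Fin 3) :
    (S η η' *ᵥ (W *ᵥ c)) k = c 0 + ω ^ (k : ℕ) * (η' * c 1) + (ω ^ (k : ℕ))⁻¹ * (η * c 2) := by
  rw [mulVec_mulVec, S_mul_W, ← mulVec_mulVec, W_mulVec_apply]
  simp [mulVec_diagonal]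

theorem W_mulVec_zero_sqrt_neg_sqrt :
    W *ᵥ ![0, (√3 / 3 : ℂ), -(√3 / 3 : ℂ)] = ![0, Complex.I, -Complex.I] := by
  have sqrt_sq : (√3 : ℂ) ^ 2 = 3 := by norm_cast; simp
  have coeff_mul : (√3 / 3 : ℂ) * (ω - ω ^ 2) = Complex.I := by
    rw [ω_sub_ω_sq]; linear_combination Complex.I / 3 * sqrt_sq
  ext k
  fin_cases k <;> simp only [W, mulVec, dotProduct, Fin.sum_univ_three, of_apply, cons_val,
    Fin.zero_eta, Fin.mk_one, Fin.reduceFinMk]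
  · ring
  · linear_combination coeff_mul
  · linear_combination -coeff_mul

theorem S_mulVec_zero_I_neg_I_apply (η η' : ℂ) (k : Fin 3) :
    (S η η' *ᵥ ![0, Complex.I, -Complex.I]) k =
      √3 / 3 * (ω ^ (k : ℕ) * η' - (ω ^ (k : ℕ))⁻¹ * η) := by
  rw [← W_mulVec_zero_sqrt_neg_sqrt, S_mulVec_W_mulVec_apply]
  simp only [cons_val]
  ring

/-- The parameter `η(t)` of the orbit, as a function of `z = exp (2πit)`. -/
noncomputable def orbitη (z : ℂ) : ℂ := -2 * z + (z ^ 2)⁻¹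

/-- The parameter `η'(t)` of the orbit, as a function of `z = exp (2πit)`. -/
noncomputable def orbitη' (z : ℂ) : ℂ := 2 * z⁻¹ + z ^ 2

theorem orbitη_inv_mul {ζ : ℂ} (hζ : ζ ^ 3 = 1) (z : ℂ) : orbitη (ζ⁻¹ * z) = ζ⁻¹ * orbitη z := by
  simp only [orbitη, mul_pow, mul_inv, inv_pow, inv_inv, sq_eq_inv_of_pow_three_eq_one hζ]
  ring

theorem orbitη'_inv_mul {ζ : ℂ} (hζ : ζ ^ 3 = 1) (z : ℂ) : orbitη' (ζ⁻¹ * z) = ζ * orbitη' z := by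
  simp only [orbitη', mul_pow, mul_inv, inv_pow, inv_inv, sq_eq_inv_of_pow_three_eq_one hζ]
  ring

/-- The point of the figure eight swept out by the first vertex of the orbit, parametrized by
`z = exp (2πit)` on the unit circle. -/
noncomputable def figureEightPoint (z : ℂ) : ℂ :=
  ⟨4 * √3 / 3 * z.re, 4 * √3 / 3 * (z.re * z.im)⟩

theorem figureEightPoint_equation {z : ℂ} (hz : ‖z‖ = 1) :
    (figureEightPoint z).re ^ 2 =
      3 / 16 * (figureEightPoint z).re ^ 4 + (figureEightPoint z).im ^ 2 := by
  have re_sq_add_im_sq : z.re ^ 2 + z.im ^ 2 = 1 := by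
    rw [← Complex.normSq_add_mul_I, Complex.re_add_im, Complex.normSq_eq_norm_sq, hz, one_pow]
  have sqrt_sq : √3 ^ 2 = 3 := Real.sq_sqrt (by norm_num)
  simp only [figureEightPoint]
  linear_combination -16 / 9 * √3 ^ 2 * z.re ^ 2 * re_sq_add_im_sq -
    16 / 27 * √3 ^ 2 * z.re ^ 4 * sqrt_sq

theorem figureEightPoint_eq_orbitη'_sub_orbitη {z : ℂ} (hz : ‖z‖ = 1) :
    figureEightPoint z = √3 / 3 * (orbitη' z - orbitη z) := by
  rw [orbitη, orbitη', ← inv_pow, Complex.inv_eq_conj hz]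
  apply Complex.ext <;> simp [figureEightPoint, pow_two] <;> ring

theorem S_orbit_mulVec_apply {z : ℂ} (hz : ‖z‖ = 1) (k : Fin 3) :
    (S (orbitη z) (orbitη' z) *ᵥ ![0, Complex.I, -Complex.I]) k =
      figureEightPoint ((ω ^ (k : ℕ))⁻¹ * z) := by
  rw [S_mulVec_zero_I_neg_I_apply, ← orbitη_inv_mul (ω_pow_pow_three k),
    ← orbitη'_inv_mul (ω_pow_pow_three k),
    figureEightPoint_eq_orbitη'_sub_orbitη ((norm_ω_pow_inv_mul k z).trans hz)]

theorem orbitη_fourierChar (t : ℝ) : orbitη (𝐞 t) = -2 * 𝐞 t + 𝐞 (-2 * t) := by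
  have map_neg_two_mul : 𝐞 (-2 * t) = (𝐞 t ^ 2)⁻¹ := by
    rw [← AddChar.map_nsmul_eq_pow, ← AddChar.map_neg_eq_inv, nsmul_eq_mul, Nat.cast_ofNat, neg_mul]
  rw [orbitη, map_neg_two_mul, Circle.coe_inv, Circle.coe_pow]

theorem orbitη'_fourierChar (t : ℝ) : orbitη' (𝐞 t) = 2 * 𝐞 (-t) + 𝐞 (2 * t) := by
  have map_two_mul : 𝐞 (2 * t) = 𝐞 t ^ 2 := by
    rw [← AddChar.map_nsmul_eq_pow, nsmul_eq_mul, Nat.cast_ofNat]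
  rw [orbitη', map_two_mul, AddChar.map_neg_eq_inv, Circle.coe_inv, Circle.coe_pow]

theorem figureEightPoint_fourierChar (t : ℝ) :
    figureEightPoint (𝐞 t) =
      ((4 * √3 / 3 : ℝ) : ℂ) * ((Real.cos (2 * Real.pi * t) : ℝ) : ℂ)
        + Complex.I * (((2 * √3 / 3 : ℝ) : ℂ) * ((Real.sin (4 * Real.pi * t) : ℝ) : ℂ)) := by
  have sin_double : Real.sin (4 * Real.pi * t) =
      2 * Real.sin (2 * Real.pi * t) * Real.cos (2 * Real.pi * t) := by
    rw [← Real.sin_two_mul]; ring_nf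
  rw [figureEightPoint, Real.fourierChar_apply, Complex.exp_ofReal_mul_I_re,
    Complex.exp_ofReal_mul_I_im, sin_double, Complex.mk_eq_add_mul_I]
  push_cast
  ring

theorem figure_eight_orbit (t : ℝ) :
    let e : ℝ → ℂ := fun s => Complex.exp (2 * (Real.pi : ℂ) * Complex.I * (s : ℂ))
    let Δt : Fin 3 → ℂ :=
      (S (-2 * e t + e (-2 * t)) (2 * e (-t) + e (2 * t))).mulVec
        ![0, Complex.I, -Complex.I]
    Δt 0 = ((4 * Real.sqrt 3 / 3 : ℝ) : ℂ) * ((Real.cos (2 * Real.pi * t) : ℝ) : ℂ)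
        + Complex.I * (((2 * Real.sqrt 3 / 3 : ℝ) : ℂ) * ((Real.sin (4 * Real.pi * t) : ℝ) : ℂ)) ∧
    ∀ k : Fin 3, ((Δt k).re) ^ 2 = (3 / 16) * ((Δt k).re) ^ 4 + ((Δt k).im) ^ 2 := by
  intro e Δt
  have he (s : ℝ) : e s = 𝐞 s := by
    simp only [e, Real.fourierChar_apply]
    congr 1; push_cast; ring
  have hΔt (k : Fin 3) : Δt k = figureEightPoint ((ω ^ (k : ℕ))⁻¹ * 𝐞 t) := by
    simp only [Δt, he, ← orbitη_fourierChar, ← orbitη'_fourierChar]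
    exact S_orbit_mulVec_apply (Circle.norm_coe _) k
  refine ⟨?_, fun k => ?_⟩
  · rw [hΔt, Fin.val_zero, pow_zero, inv_one, one_mul, figureEightPoint_fourierChar]
  · rw [hΔt]
    exact figureEightPoint_equation ((norm_ω_pow_inv_mul k _).trans (Circle.norm_coe _))
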